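/- arXiv:2104.11851 — 3 statements merged into one kernel-verified Lean document; each statement's English description precedes it below -/
import Mathlib

section
/- Let D ⊆ ℂ be an open connected set, H a complex Hilbert space, and F : D → L(H) an analytic operator-valued function such that F(λ) is a compact operator for every λ ∈ D. Then at least one of the following holds: (1) Id − F(λ) is boundedly invertible for no λ ∈ D; or (2) there exists a subset S ⊆ D with no accumulation point in D such that Id − F(λ) is boundedly invertible for every λ ∈ D \ S. -/
/-!
The analytic Fredholm theorem, by reduction to a finite-dimensional determinant.

Near a point `z₀ ∈ D`, choose a finite-dimensional subspace `V` whose orthogonal projection `P`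
satisfies `‖(1 - P) F(z₀)‖ < 1` (`exists_finiteDimensional_projection_approx`; this is where
compactness enters). By continuity `A(z) = 1 - (1 - P) F(z)` is invertible for `z` near `z₀`, and
`1 - F(z) = (1 - P F(z) A(z)⁻¹) A(z)`. The operator `P F(z) A(z)⁻¹` takes values in `V`, so
`1 - P F(z) A(z)⁻¹` is invertible on `H` iff its compression to `V` is invertible
(`isUnit_one_sub_comp_swap`), i.e. iff its determinant `d(z)` does not vanish. The function `d` is
analytic at `z₀`, hence vanishes near `z₀` or has no zeros in a punctured neighborhood
of `z₀` (`local_dichotomy`).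

The two local behaviors define disjoint open sets covering `D`, so connectedness makes one of
them hold at every point of `D`.
-/

open Filter Topology

/-- The swap `1 - A B ↔ 1 - B A` for maps between different spaces: the inverse of `1 - B A`
is `1 + B (1 - A B)⁻¹ A`. -/
lemma isUnit_one_sub_comp_swap {E G : Type*} [NormedAddCommGroup E] [NormedSpace ℂ E]
    [NormedAddCommGroup G] [NormedSpace ℂ G] (A : E →L[ℂ] G) (B : G →L[ℂ] E)
    (h : IsUnit (1 - A ∘L B)) : IsUnit (1 - B ∘L A) := by
  obtain ⟨R, h1, h2⟩ := isUnit_iff_exists.1 h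
  have h1' : ∀ x, R x - A (B (R x)) = x := fun x => by simpa using DFunLike.congr_fun h1 x
  have h2' : ∀ x, R x - R (A (B x)) = x := fun x => by simpa using DFunLike.congr_fun h2 x
  refine isUnit_iff_exists.2 ⟨1 + B ∘L R ∘L A, ?_, ?_⟩
  · ext x
    have := congrArg B (h1' (A x))
    simp only [map_sub] at this
    simp only [mul_apply_eq_comp, sub_apply,
      add_apply, one_apply_eq_self,
      ContinuousLinearMap.comp_apply, map_add]
    rw [← this]
    abel
  · ext x
    have := congrArg B (h2' (A x))
    simp only [map_sub] at this
    simp only [mul_apply_eq_comp, sub_apply,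
      add_apply, one_apply_eq_self,
      ContinuousLinearMap.comp_apply, map_sub]
    rw [add_sub_assoc, sub_add_eq_sub_sub, sub_right_comm, this]
    abel

/-- A compact operator is approximated in norm by its projections to finite-dimensional
subspaces: take the span of a finite net of the image of the unit ball. -/
lemma exists_finiteDimensional_projection_approx {H : Type*} [NormedAddCommGroup H]
    [InnerProductSpace ℂ H] (K : H →L[ℂ] H) (hK : IsCompactOperator K)
    {ε : ℝ} (hε : 0 < ε) :
    ∃ (V : Submodule ℂ H) (_ : FiniteDimensional ℂ V),
      ‖(1 - V.starProjection) * K‖ ≤ ε := by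
  have hc := IsCompactOperator.isCompact_closure_image_closedBall (f := (K : H →ₗ[ℂ] H)) hK 1
  obtain ⟨t, htf, ht⟩ := Metric.totallyBounded_iff.1 hc.totallyBounded ε hε
  have hfd : FiniteDimensional ℂ (Submodule.span ℂ t) := FiniteDimensional.span_of_finite ℂ htf
  refine ⟨Submodule.span ℂ t, hfd, ?_⟩
  refine ContinuousLinearMap.opNorm_le_of_unit_norm (𝕜 := ℂ) hε.le fun x hx => ?_
  have hmem : K x ∈ closure ((K : H →ₗ[ℂ] H) '' Metric.closedBall 0 1) :=
    subset_closure ⟨x, by simp [hx], rfl⟩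
  obtain ⟨y, hy, hxy⟩ := Set.mem_iUnion₂.1 (ht hmem)
  have hmin := Submodule.starProjection_minimal (U := Submodule.span ℂ t) (K x)
  have hle : ‖K x - (Submodule.span ℂ t).starProjection (K x)‖ ≤ ‖K x - y‖ := by
    rw [hmin]
    exact ciInf_le ⟨0, by rintro _ ⟨v, rfl⟩; positivity⟩
      (⟨y, Submodule.subset_span hy⟩ : Submodule.span ℂ t)
  rw [Metric.mem_ball, dist_eq_norm] at hxy
  simpa using hle.trans hxy.le

lemma analyticAt_det {V : Type*} [NormedAddCommGroup V] [NormedSpace ℂ V]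
    [FiniteDimensional ℂ V] {f : ℂ → V →L[ℂ] V} {z₀ : ℂ} (hf : AnalyticAt ℂ f z₀) :
    AnalyticAt ℂ (fun z => LinearMap.det (f z : V →ₗ[ℂ] V)) z₀ := by
  let b := Module.finBasis ℂ V
  simp_rw [← LinearMap.det_toMatrix b, Matrix.det_apply]
  refine Finset.analyticAt_fun_sum _ fun σ _ => ?_
  simp_rw [Units.smul_def, zsmul_eq_mul]
  refine analyticAt_const.mul (Finset.analyticAt_fun_prod _ fun i _ => ?_)
  -- Each matrix entry is a continuous linear functional of the operator.
  let ev : (V →L[ℂ] V) →L[ℂ] ℂ :=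
    (LinearMap.toContinuousLinearMap (b.coord (σ i))) ∘L ContinuousLinearMap.apply ℂ V (b i)
  have h := (ev.analyticAt (f z₀)).comp hf
  refine h.congr (Eventually.of_forall fun z => ?_)
  simp [ev, LinearMap.toMatrix_apply]

lemma isUnit_iff_det_ne_zero {V : Type*} [NormedAddCommGroup V] [NormedSpace ℂ V]
    [FiniteDimensional ℂ V] (f : V →L[ℂ] V) :
    IsUnit f ↔ LinearMap.det (f : V →ₗ[ℂ] V) ≠ 0 := by
  have := FiniteDimensional.complete ℂ V
  rw [ContinuousLinearMap.isUnit_iff_bijective, ← isUnit_iff_ne_zero,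
    ← LinearMap.isUnit_iff_isUnit_det, Module.End.isUnit_iff]
  rfl

/-- Near each point, `1 - F` is either nowhere invertible, or invertible except possibly at the
point itself. -/
lemma local_dichotomy {H : Type*} [NormedAddCommGroup H] [InnerProductSpace ℂ H]
    [CompleteSpace H] {F : ℂ → H →L[ℂ] H} {z₀ : ℂ} (hF : AnalyticAt ℂ F z₀)
    (hK : IsCompactOperator (F z₀)) :
    (∀ᶠ z in 𝓝 z₀, ¬ IsUnit (1 - F z)) ∨ ∀ᶠ z in 𝓝[≠] z₀, IsUnit (1 - F z) := by
  obtain ⟨V, hV, hnorm⟩ :=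
    exists_finiteDimensional_projection_approx (F z₀) hK (ε := 1 / 2) (by norm_num)
  set Q : H →L[ℂ] H := 1 - V.starProjection with hQ
  have hQF : AnalyticAt ℂ (fun z => Q * F z) z₀ := analyticAt_const.mul hF
  have hsmall : ∀ᶠ z in 𝓝 z₀, ‖Q * F z‖ < 1 :=
    hQF.continuousAt.norm.eventually_lt_const (by linarith)
  have hA : AnalyticAt ℂ (fun z => 1 - Q * F z) z₀ := analyticAt_const.sub hQF
  have hu : IsUnit (1 - Q * F z₀) := isUnit_one_sub_of_norm_lt_one (by linarith)
  have hinv : AnalyticAt ℂ (fun z => Ring.inverse (1 - Q * F z)) z₀ := by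
    have h := analyticAt_inverse (𝕜 := ℂ) hu.unit
    rw [IsUnit.unit_spec] at h
    exact AnalyticAt.comp (g := Ring.inverse) (f := fun z => 1 - Q * F z) h hA
  have hFi : AnalyticAt ℂ (fun z => F z * Ring.inverse (1 - Q * F z)) z₀ := hF.mul hinv
  -- Compression of an operator on `H` to `V`.
  let c : (H →L[ℂ] H) →L[ℂ] (V →L[ℂ] V) :=
    (ContinuousLinearMap.compL ℂ V H V V.orthogonalProjectionOnto) ∘L
      ((ContinuousLinearMap.compL ℂ V H H).flip V.subtypeL)
  have hc := ContinuousLinearMap.analyticAt (𝕜 := ℂ) (E := H →L[ℂ] H) (F := V →L[ℂ] V) c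
    (F z₀ * Ring.inverse (1 - Q * F z₀))
  have hM : AnalyticAt ℂ (fun z => 1 - c (F z * Ring.inverse (1 - Q * F z))) z₀ :=
    analyticAt_const.sub (AnalyticAt.comp (g := c)
      (f := fun z => F z * Ring.inverse (1 - Q * F z)) hc hFi)
  have hkey : ∀ᶠ z in 𝓝 z₀, (IsUnit (1 - F z) ↔
      LinearMap.det ((1 - c (F z * Ring.inverse (1 - Q * F z)) : V →L[ℂ] V) : V →ₗ[ℂ] V) ≠ 0) := by
    filter_upwards [hsmall] with z hz
    have hAu : IsUnit (1 - Q * F z) := isUnit_one_sub_of_norm_lt_one hz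
    set R := Ring.inverse (1 - Q * F z) with hR
    have hfac : 1 - F z =
        (1 - V.subtypeL ∘L (V.orthogonalProjectionOnto ∘L (F z * R))) * (1 - Q * F z) := by
      have h1 : V.subtypeL ∘L (V.orthogonalProjectionOnto ∘L (F z * R))
          = V.starProjection * (F z * R) := rfl
      rw [h1, sub_mul (1 : H →L[ℂ] H), mul_assoc, mul_assoc, hR, Ring.inverse_mul_cancel _ hAu, hQ]
      noncomm_ring
    rw [hfac, ← isUnit_iff_det_ne_zero]
    have hmul : ∀ T : H →L[ℂ] H, IsUnit (T * (1 - Q * F z)) ↔ IsUnit T := by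
      intro T
      obtain ⟨u, hu'⟩ := hAu
      rw [← hu']
      exact Units.isUnit_mul_units T u
    rw [hmul]
    exact ⟨isUnit_one_sub_comp_swap V.subtypeL (V.orthogonalProjectionOnto ∘L (F z * R)),
      isUnit_one_sub_comp_swap (V.orthogonalProjectionOnto ∘L (F z * R)) V.subtypeL⟩
  rcases (analyticAt_det hM).eventually_eq_zero_or_eventually_ne_zero with h | h
  · left
    filter_upwards [hkey, h] with z h1 h2
    simp only [h1, h2, ne_eq, not_true_eq_false, not_false_eq_true]
  · right
    filter_upwards [hkey.filter_mono nhdsWithin_le_nhds, h] with z h1 h2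
    exact h1.2 h2

/-- Analytic Fredholm theorem (Reed–Simon, Theorem VI.14), dichotomy form:
for an analytic family `F` of compact operators on a complex Hilbert space `H`,
defined on an open connected set `D ⊆ ℂ`, either `Id - F λ` is invertible for no
`λ ∈ D`, or it is invertible for all `λ ∈ D` outside a set with no accumulation
point in `D`. -/
theorem analytic_fredholm_dichotomy
    {H : Type*} [NormedAddCommGroup H] [InnerProductSpace ℂ H] [CompleteSpace H]
    (D : Set ℂ) (hDopen : IsOpen D) (hDconn : IsConnected D)
    (F : ℂ → H →L[ℂ] H) (hFanalytic : AnalyticOnNhd ℂ F D)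
    (hFcompact : ∀ z ∈ D, IsCompactOperator (F z)) :
    (∀ z ∈ D, ¬ IsUnit (1 - F z)) ∨
      (∃ S : Set ℂ, S ⊆ D ∧ (∀ z ∈ D, ∃ U ∈ 𝓝 z, U ∩ S ⊆ {z}) ∧
        ∀ z ∈ D, z ∉ S → IsUnit (1 - F z)) := by
  have hopen1 : IsOpen {z : ℂ | ∀ᶠ w in 𝓝 z, ¬ IsUnit (1 - F w)} :=
    isOpen_setOfPred_eventually_nhds
  have hopen2 : IsOpen {z : ℂ | ∀ᶠ w in 𝓝[≠] z, IsUnit (1 - F w)} := by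
    rw [isOpen_iff_eventually]
    intro z hz
    obtain ⟨U, hU, hUo, hzU⟩ := eventually_nhds_iff.1 (eventually_nhdsWithin_iff.1 hz)
    filter_upwards [hUo.mem_nhds hzU] with w hw
    by_cases hwz : w = z
    · rwa [hwz]
    · refine Eventually.filter_mono nhdsWithin_le_nhds ?_
      filter_upwards [hUo.mem_nhds hw, isOpen_ne.mem_nhds hwz] with v hv hvz
      exact hU v hv hvz
  have hdisj : Disjoint {z : ℂ | ∀ᶠ w in 𝓝 z, ¬ IsUnit (1 - F w)}
      {z : ℂ | ∀ᶠ w in 𝓝[≠] z, IsUnit (1 - F w)} := by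
    rw [Set.disjoint_left]
    intro z h1 h2
    obtain ⟨w, hw1, hw2⟩ :=
      ((Eventually.filter_mono (nhdsWithin_le_nhds (s := {z}ᶜ)) h1).and h2).exists
    exact hw1 hw2
  rcases IsPreconnected.subset_or_subset hopen1 hopen2 hdisj
    (fun z hz => local_dichotomy (hFanalytic z hz) (hFcompact z hz))
    hDconn.isPreconnected with h | h
  · exact Or.inl fun z hz => (h hz).self_of_nhds
  · refine Or.inr ⟨{z ∈ D | ¬ IsUnit (1 - F z)}, fun z hz => hz.1, fun z hz => ?_,
      fun z hz hzS => by_contra fun hn => hzS ⟨hz, hn⟩⟩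
    refine ⟨_, eventually_nhdsWithin_iff.1 (h hz), ?_⟩
    rintro w ⟨hw1, hw2⟩
    by_contra hne
    exact hw2.2 (hw1 hne)
end

section
/- Let n ≥ 2, let Ω be a bounded Lebesgue-measurable subset of ℝⁿ, and let k : Ω × Ω → ℂ be measurable with |k(x,y)| ≤ C‖x − y‖^{1−n} for all (x,y) ∈ Ω × Ω, for some constant C > 0. Then the integral operator Φf(x) = ∫_Ω k(x,y) f(y) dy is a well-defined compact operator on L²(Ω). -/
open MeasureTheory
open scoped ENNReal NNReal

/-!
The operator exists and is bounded by the Schur test: since `C ‖z‖ ^ (1 - n)` is locally integrable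
on `ℝⁿ`, the integrals of `‖k (x, y)‖` over `Ω` in either variable are bounded uniformly in the
other one (`schur_test`).

For compactness, split `k` at distance `r` from the diagonal. The far part is bounded by
`C r ^ (1 - n)`, hence lies in `L²(Ω × Ω)` and gives a Hilbert–Schmidt, so compact, operator
(`IsKernelOf.isCompactOperator_of_bounded`, resting on the abstract criterion
`isCompactOperator_of_summable_sq`). By the Schur test the near part has operator norm at most
`∫_{‖z‖ < r} C ‖z‖ ^ (1 - n) dz`, which tends to `0` with `r`. Thus `Φ` is a norm limit of compact
operators.
-/

/-- A Hilbert–Schmidt operator is compact: the rank one operators `f ↦ ⟪b i, f⟫ • Φ (b i)` sum to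
`Φ` in operator norm, by Cauchy–Schwarz and Bessel's inequality. -/
theorem isCompactOperator_of_summable_sq {ι H H' : Type*}
    [NormedAddCommGroup H] [InnerProductSpace ℂ H] [CompleteSpace H]
    [NormedAddCommGroup H'] [NormedSpace ℂ H'] [CompleteSpace H']
    (b : HilbertBasis ι ℂ H) (Φ : H →L[ℂ] H')
    (hΦ : Summable fun i => ‖Φ (b i)‖ ^ 2) : IsCompactOperator Φ := by
  let R : ι → H →L[ℂ] H' := fun i => (innerSL ℂ (b i)).smulRight (Φ (b i))
  have hR : ∀ i f, R i f = inner ℂ (b i) f • Φ (b i) := fun i f => rfl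
  have hRc : ∀ i, IsCompactOperator (R i) := by
    intro i
    exact (isCompactOperator_of_locallyCompactSpace_rng
      ((1 : ℂ →L[ℂ] ℂ).smulRight (Φ (b i)))).comp_clm (innerSL ℂ (b i))
  have hbound : ∀ t : Finset ι, ‖∑ i ∈ t, R i‖ ≤ √(∑ i ∈ t, ‖Φ (b i)‖ ^ 2) := by
    intro t
    refine ContinuousLinearMap.opNorm_le_bound _ (Real.sqrt_nonneg _) fun f => ?_
    rw [sum_apply]
    calc ‖∑ i ∈ t, R i f‖ ≤ ∑ i ∈ t, ‖inner ℂ (b i) f‖ * ‖Φ (b i)‖ := by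
          refine (norm_sum_le _ _).trans (le_of_eq ?_)
          simp only [hR, norm_smul]
      _ ≤ √(∑ i ∈ t, ‖inner ℂ (b i) f‖ ^ 2) * √(∑ i ∈ t, ‖Φ (b i)‖ ^ 2) :=
          Real.sum_mul_le_sqrt_mul_sqrt _ _ _
      _ ≤ ‖f‖ * √(∑ i ∈ t, ‖Φ (b i)‖ ^ 2) := by
          gcongr
          exact Real.sqrt_le_iff.2 ⟨norm_nonneg _, b.orthonormal.sum_inner_products_le f⟩
      _ = _ := mul_comm _ _
  have hsum : Summable R := by
    rw [summable_iff_vanishing_norm]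
    intro ε hε
    obtain ⟨s, hs⟩ := summable_iff_vanishing_norm.1 hΦ (ε ^ 2) (by positivity)
    refine ⟨s, fun t ht => (hbound t).trans_lt ?_⟩
    rw [Real.sqrt_lt' hε]
    exact (le_abs_self _).trans_lt (hs t ht)
  have hΦR : HasSum R Φ := by
    have : ∑' i, R i = Φ := by
      ext f
      have h1 : HasSum (fun i => R i f) ((∑' i, R i) f) :=
        hsum.hasSum.mapL (ContinuousLinearMap.apply ℂ H' f)
      have h2 := (b.hasSum_repr f).mapL Φ
      refine h1.unique ?_
      simpa [hR, b.repr_apply_apply] using h2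
    rw [← this]; exact hsum.hasSum
  refine isCompactOperator_of_tendsto hΦR (Filter.Eventually.of_forall fun s => ?_)
  exact (compactOperator (RingHom.id ℂ) H H').sum_mem fun i _ => hRc i

/-- Cauchy–Schwarz for the measure with density `a`, applied to `1` and `u`. -/
theorem sq_lintegral_mul_le {α : Type*} [MeasurableSpace α] {μ : Measure α} {a u : α → ℝ≥0∞}
    (ha : Measurable a) (hu : Measurable u) :
    (∫⁻ y, a y * u y ∂μ) ^ 2 ≤ (∫⁻ y, a y ∂μ) * ∫⁻ y, a y * u y ^ 2 ∂μ := by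
  have h := ENNReal.lintegral_mul_le_Lp_mul_Lq μ Real.HolderConjugate.two_two
    (f := fun y => a y ^ (1 / 2 : ℝ)) (g := fun y => a y ^ (1 / 2 : ℝ) * u y)
    (by fun_prop) (by fun_prop)
  have e2 : ∀ x : ℝ≥0∞, (x ^ (1 / 2 : ℝ)) ^ (2 : ℕ) = x := fun x => by
    rw [← ENNReal.rpow_natCast, ← ENNReal.rpow_mul]; norm_num
  have e1 : ∀ x : ℝ≥0∞, x ^ (1 / 2 : ℝ) * x ^ (1 / 2 : ℝ) = x := fun x => by
    rw [← sq, e2]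
  simp only [Pi.mul_apply, ← mul_assoc, e1, ENNReal.rpow_two, mul_pow, e2] at h
  calc _ ≤ _ := pow_le_pow_left' h 2
    _ = _ := by rw [mul_pow, e2, e2]

/-- `Φ` is the integral operator on `L²(μ)` with kernel `k`. Almost everywhere convergence of the
defining integral is part of the notion, since a divergent Bochner integral is `0`. -/
def IsKernelOf {α : Type*} [MeasurableSpace α] {μ : Measure α} (k : α × α → ℂ)
    (Φ : Lp ℂ 2 μ →L[ℂ] Lp ℂ 2 μ) : Prop :=
  ∀ f : Lp ℂ 2 μ, (∀ᵐ x ∂μ, Integrable (fun y => k (x, y) * f y) μ) ∧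
    Φ f =ᵐ[μ] fun x => ∫ y, k (x, y) * f y ∂μ

/-- The Schur test: `A` bounds both marginal integrals of `‖k‖`, hence also the norm of the integral
operator with kernel `k`. -/
theorem schur_test {α : Type*} [MeasurableSpace α] {μ : Measure α} [SFinite μ]
    {k : α × α → ℂ} (hk : Measurable k) (A : ℝ≥0)
    (h1 : ∀ᵐ x ∂μ, ∫⁻ y, ‖k (x, y)‖ₑ ∂μ ≤ A) (h2 : ∀ᵐ y ∂μ, ∫⁻ x, ‖k (x, y)‖ₑ ∂μ ≤ A) :
    ∃ Φ : Lp ℂ 2 μ →L[ℂ] Lp ℂ 2 μ, ‖Φ‖ ≤ A ∧ IsKernelOf k Φ := by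
  have hfm : ∀ f : Lp ℂ 2 μ, Measurable f := fun f => (Lp.stronglyMeasurable f).measurable
  have hnorm : ∀ f : Lp ℂ 2 μ, ∫⁻ y, ‖f y‖ₑ ^ 2 ∂μ = ‖f‖ₑ ^ 2 := by
    intro f
    rw [Lp.enorm_def, eLpNorm_eq_lintegral_rpow_enorm_toReal (by norm_num) (by norm_num)]
    rw [← ENNReal.rpow_natCast, ← ENNReal.rpow_mul]
    norm_num
  -- Pointwise Cauchy–Schwarz, then Tonelli; this carries both integrability and the norm bound.
  have hmain : ∀ f : Lp ℂ 2 μ,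
      ∫⁻ x, (∫⁻ y, ‖k (x, y) * f y‖ₑ ∂μ) ^ 2 ∂μ ≤ (A * ‖f‖ₑ) ^ 2 := by
    intro f
    have hf := hfm f
    calc ∫⁻ x, (∫⁻ y, ‖k (x, y) * f y‖ₑ ∂μ) ^ 2 ∂μ
        ≤ ∫⁻ x, A * ∫⁻ y, ‖k (x, y)‖ₑ * ‖f y‖ₑ ^ 2 ∂μ ∂μ := by
          refine lintegral_mono_ae ?_
          filter_upwards [h1] with x hx
          simp only [enorm_mul]
          refine (sq_lintegral_mul_le (by fun_prop) (by fun_prop)).trans ?_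
          gcongr
      _ = A * ∫⁻ y, ∫⁻ x, ‖k (x, y)‖ₑ * ‖f y‖ₑ ^ 2 ∂μ ∂μ := by
          rw [lintegral_const_mul' _ _ (by simp)]
          rw [lintegral_lintegral_swap]
          fun_prop
      _ ≤ A * ∫⁻ y, A * ‖f y‖ₑ ^ 2 ∂μ := by
          refine mul_le_mul_right (lintegral_mono_ae ?_) _
          filter_upwards [h2] with y hy
          rw [lintegral_mul_const _ (by fun_prop)]
          gcongr
      _ = _ := by
          rw [lintegral_const_mul' _ _ (by simp), hnorm]
          ring
  have hkint : ∀ f : Lp ℂ 2 μ, ∀ᵐ x ∂μ, Integrable (fun y => k (x, y) * f y) μ := by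
    intro f
    have hf := hfm f
    have hfin : ∫⁻ x, (∫⁻ y, ‖k (x, y) * f y‖ₑ ∂μ) ^ 2 ∂μ ≠ ∞ :=
      ((hmain f).trans_lt (by finiteness)).ne
    filter_upwards [ae_lt_top' (by fun_prop) hfin] with x hx
    refine ⟨by fun_prop, ?_⟩
    simpa [HasFiniteIntegral] using hx
  have hlp : ∀ f : Lp ℂ 2 μ, eLpNorm (fun x => ∫ y, k (x, y) * f y ∂μ) 2 μ ≤ A * ‖f‖ₑ := by
    intro f
    rw [eLpNorm_eq_lintegral_rpow_enorm_toReal (by norm_num) (by norm_num)]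
    have : ∫⁻ x, ‖∫ y, k (x, y) * f y ∂μ‖ₑ ^ 2 ∂μ ≤ (A * ‖f‖ₑ) ^ 2 := by
      refine le_trans (lintegral_mono fun x => ?_) (hmain f)
      gcongr
      exact enorm_integral_le_lintegral_enorm _
    calc _ ≤ ((A * ‖f‖ₑ) ^ 2) ^ (1 / 2 : ℝ) := by
          simpa using ENNReal.rpow_le_rpow this (by norm_num : (0 : ℝ) ≤ 1 / 2)
      _ = _ := by
          rw [← ENNReal.rpow_natCast, ← ENNReal.rpow_mul]; norm_num
  have hmem : ∀ f : Lp ℂ 2 μ, MemLp (fun x => ∫ y, k (x, y) * f y ∂μ) 2 μ := by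
    intro f
    have hf := hfm f
    refine ⟨?_, (hlp f).trans_lt (by finiteness)⟩
    have : Measurable fun p : α × α => k (p.1, p.2) * f p.2 := by fun_prop
    exact this.stronglyMeasurable.integral_prod_right'.aestronglyMeasurable
  let L : Lp ℂ 2 μ →ₗ[ℂ] Lp ℂ 2 μ :=
    { toFun := fun f => (hmem f).toLp
      map_add' := by
        intro f g
        rw [← MemLp.toLp_add]
        refine MemLp.toLp_congr _ _ ?_
        filter_upwards [hkint f, hkint g] with x hf hg
        rw [Pi.add_apply, ← integral_add hf hg]
        refine integral_congr_ae ?_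
        filter_upwards [Lp.coeFn_add f g] with y hy
        rw [hy, Pi.add_apply, mul_add]
      map_smul' := by
        intro c f
        rw [RingHom.id_apply, ← MemLp.toLp_const_smul]
        refine MemLp.toLp_congr _ _ ?_
        filter_upwards with x
        rw [Pi.smul_apply, ← integral_smul]
        refine integral_congr_ae ?_
        filter_upwards [Lp.coeFn_smul c f] with y hy
        rw [hy, Pi.smul_apply, smul_eq_mul, smul_eq_mul]
        ring }
  have hL : ∀ f, ‖L f‖ ≤ A * ‖f‖ := by
    intro f
    have : ‖L f‖ₑ ≤ A * ‖f‖ₑ := by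
      simpa [L, Lp.enorm_toLp] using hlp f
    have h := ENNReal.toReal_mono (by finiteness) this
    simpa using h
  refine ⟨L.mkContinuous A hL, L.mkContinuous_norm_le A.2 hL, fun f => ⟨hkint f, ?_⟩⟩
  exact (hmem f).coeFn_toLp

/-- With `g x = conj (k (x, ·))` one has `Φ f x = ⟪g x, f⟫`, so by Bessel's inequality
`∑ ‖Φ (b i)‖ ^ 2 ≤ ∫ ‖g x‖ ^ 2 < ∞` for every Hilbert basis `b`: `Φ` is Hilbert–Schmidt. -/
theorem IsKernelOf.isCompactOperator_of_bounded {α : Type*} [MeasurableSpace α] {μ : Measure α}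
    [IsFiniteMeasure μ] {k : α × α → ℂ} (hk : Measurable k) {M : ℝ}
    (hM : ∀ p, ‖k p‖ ≤ M) {Φ : Lp ℂ 2 μ →L[ℂ] Lp ℂ 2 μ} (hΦ : IsKernelOf k Φ) :
    IsCompactOperator Φ := by
  obtain ⟨w, b, -⟩ := exists_hilbertBasis ℂ (Lp ℂ 2 μ)
  have hmem : ∀ x, MemLp (fun y => star (k (x, y))) 2 μ := fun x =>
    MemLp.of_bound (by
      have : Measurable fun y => k (x, y) := by fun_prop
      exact (continuous_star.measurable.comp this).aestronglyMeasurable) M (.of_forall fun y => by simpa using hM (x, y))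
  let g : α → Lp ℂ 2 μ := fun x => (hmem x).toLp
  let B : ℝ := μ.real Set.univ ^ ((2 : ℝ≥0∞).toReal⁻¹) * M
  have hg : ∀ x, ‖g x‖ ≤ B := by
    intro x
    refine Lp.norm_le_of_ae_bound ((norm_nonneg _).trans (hM (x, x))) ?_
    filter_upwards [(hmem x).coeFn_toLp] with y hy
    rw [hy, norm_star]
    exact hM (x, y)
  have hrep : ∀ f, Φ f =ᵐ[μ] fun x => inner ℂ (g x) f := by
    intro f
    filter_upwards [(hΦ f).2] with x hx
    rw [hx, L2.inner_def]
    refine integral_congr_ae ?_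
    filter_upwards [(hmem x).coeFn_toLp] with y hy
    rw [hy, RCLike.inner_apply, starRingEnd_apply, star_star, mul_comm]
  have hsq : ∀ f : Lp ℂ 2 μ, Integrable (fun x => ‖f x‖ ^ 2) μ ∧
      ‖f‖ ^ 2 = ∫ x, ‖f x‖ ^ 2 ∂μ := by
    intro f
    refine ⟨(memLp_two_iff_integrable_sq_norm (Lp.aestronglyMeasurable f)).1 (Lp.memLp f), ?_⟩
    have h : (inner ℂ f f : ℂ) = ∫ x, ((‖f x‖ ^ 2 : ℝ) : ℂ) ∂μ := by
      rw [L2.inner_def]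
      simp [inner_self_eq_norm_sq_to_K]
    rw [integral_complex_ofReal, inner_self_eq_norm_sq_to_K] at h
    refine Complex.ofReal_injective (Eq.trans ?_ h)
    push_cast
    rfl
  refine isCompactOperator_of_summable_sq b Φ
    (summable_of_sum_le (c := ∫ _, B ^ 2 ∂μ) (fun i => by positivity) fun s => ?_)
  simp only [fun i => (hsq (Φ (b i))).2]
  rw [← integral_finsetSum _ fun i _ => (hsq (Φ (b i))).1]
  refine integral_mono_ae (integrable_finsetSum _ fun i _ => (hsq (Φ (b i))).1)
    (integrable_const _) ?_
  have hall : ∀ᵐ x ∂μ, ∀ i ∈ s, Φ (b i) x = inner ℂ (g x) (b i) :=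
    (ae_ball_iff s.countable_toSet).2 fun i _ => hrep (b i)
  filter_upwards [hall] with x hx
  calc ∑ i ∈ s, ‖Φ (b i) x‖ ^ 2 = ∑ i ∈ s, ‖inner ℂ (b i) (g x)‖ ^ 2 :=
        Finset.sum_congr rfl fun i hi => by rw [hx i hi, norm_inner_symm]
    _ ≤ ‖g x‖ ^ 2 := b.orthonormal.sum_inner_products_le _
    _ ≤ B ^ 2 := by gcongr; exact hg x

/-- Weakly singular integral operators are compact: if `Ω ⊆ ℝⁿ` (`n ≥ 2`) is bounded
and measurable and `k` is a measurable kernel with `|k(x,y)| ≤ C ‖x-y‖^{1-n}` on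
`Ω × Ω`, then `Φf(x) = ∫_Ω k(x,y) f(y) dy` is a well-defined compact operator on
`L²(Ω)`. -/
theorem weakly_singular_kernel_compact
    (n : ℕ) (hn : 2 ≤ n) (Ω : Set (EuclideanSpace ℝ (Fin n)))
    (hΩmeas : MeasurableSet Ω) (hΩbdd : Bornology.IsBounded Ω)
    (k : EuclideanSpace ℝ (Fin n) × EuclideanSpace ℝ (Fin n) → ℂ)
    (hkmeas : Measurable k) (C : ℝ) (hC : 0 < C)
    (hk : ∀ x ∈ Ω, ∀ y ∈ Ω, x ≠ y → ‖k (x, y)‖ ≤ C * ‖x - y‖ ^ ((1 : ℝ) - n)) :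
    ∃ Φ : Lp ℂ 2 (volume.restrict Ω) →L[ℂ] Lp ℂ 2 (volume.restrict Ω),
      IsCompactOperator Φ ∧
      (∀ f : Lp ℂ 2 (volume.restrict Ω),
        ∀ᵐ x ∂(volume.restrict Ω),
          Integrable (fun y => k (x, y) * f y) (volume.restrict Ω)) ∧
      ∀ f : Lp ℂ 2 (volume.restrict Ω),
        (Φ f : EuclideanSpace ℝ (Fin n) → ℂ) =ᵐ[volume.restrict Ω]
          fun x => ∫ y, k (x, y) * f y ∂(volume.restrict Ω) := by
  have : Nonempty (Fin n) := ⟨⟨0, by omega⟩⟩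
  have hfinite : IsFiniteMeasure ((volume : Measure (EuclideanSpace ℝ (Fin n))).restrict Ω) :=
    ⟨by simpa using hΩbdd.measure_lt_top⟩
  set μ := (volume : Measure (EuclideanSpace ℝ (Fin n))).restrict Ω with hμ
  let w : EuclideanSpace ℝ (Fin n) → ℝ := fun z => C * ‖z‖ ^ ((1 : ℝ) - n)
  have hw : Measurable w := by fun_prop
  have hw0 : ∀ z, 0 ≤ w z := fun z => by positivity
  let I : ℝ → ℝ≥0∞ := fun r => ∫⁻ z in Metric.ball 0 r, ‖w z‖ₑ
  have hI : ∀ r, I r ≠ ∞ := by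
    intro r
    have : IntegrableOn w (Metric.ball 0 r) volume := by
      refine integrableOn_ball_of_norm_le_rpow (C := C) (α := n - 1) (by simp; omega) (by simp)
        (.of_forall fun z => ?_) hw.aestronglyMeasurable
      rw [Real.norm_of_nonneg (hw0 z), neg_sub]
    exact this.2.ne
  have hI0 : Filter.Tendsto (fun m : ℕ => I (1 / (m + 1))) Filter.atTop (nhds 0) := by
    have hsub : ∀ m : ℕ, Metric.ball (0 : EuclideanSpace ℝ (Fin n)) (1 / ((m : ℝ) + 1)) ⊆
        Metric.ball 0 1 := fun m => Metric.ball_subset_ball (by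
          rw [div_le_one (by positivity)]; linarith [Nat.cast_nonneg (α := ℝ) m])
    have h := tendsto_setLIntegral_zero (μ := volume.restrict (Metric.ball 0 1)) (hI 1)
      (s := fun m : ℕ => Metric.ball (0 : EuclideanSpace ℝ (Fin n)) (1 / ((m : ℝ) + 1)))
      (l := Filter.atTop) ?_
    · refine h.congr fun m => ?_
      rw [Measure.restrict_restrict Metric.isOpen_ball.measurableSet,
        Set.inter_eq_left.2 (hsub m)]
    · have h1 : Filter.Tendsto (fun m : ℕ => ENNReal.ofReal ((1 / ((m : ℝ) + 1)) ^ n) *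
          volume (Metric.ball (0 : EuclideanSpace ℝ (Fin n)) 1)) Filter.atTop (nhds 0) := by
        have := ENNReal.Tendsto.mul_const (ENNReal.tendsto_ofReal
          ((tendsto_one_div_add_atTop_nhds_zero_nat (𝕜 := ℝ)).pow n))
          (b := volume (Metric.ball (0 : EuclideanSpace ℝ (Fin n)) 1))
          (Or.inr Metric.isBounded_ball.measure_lt_top.ne)
        simpa [show n ≠ 0 by omega] using this
      refine h1.congr fun m => ?_
      rw [Function.comp_apply, Measure.restrict_apply Metric.isOpen_ball.measurableSet,
        Set.inter_eq_left.2 (hsub m), Measure.addHaar_ball _ _ (r := 1 / ((m : ℝ) + 1)) (by positivity)]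
      simp
  -- By translation invariance, a kernel dominated by `w (x - y)` for `‖x - y‖ < r` and vanishing
  -- otherwise has both marginal integrals at most `I r`; the diagonal is negligible.
  have hschur : ∀ r : ℝ, ∀ h : EuclideanSpace ℝ (Fin n) × EuclideanSpace ℝ (Fin n) → ℂ,
      Measurable h → (∀ x ∈ Ω, ∀ y ∈ Ω, x ≠ y → ‖h (x, y)‖ₑ ≤
        (Metric.ball 0 r).indicator (fun z => ‖w z‖ₑ) (x - y)) →
      ∃ Φ : Lp ℂ 2 μ →L[ℂ] Lp ℂ 2 μ, ‖Φ‖ ≤ (I r).toReal ∧ IsKernelOf h Φ := by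
    intro r h hh hb
    refine schur_test hh (I r).toNNReal ?_ ?_
    · filter_upwards [ae_restrict_mem hΩmeas] with x hx
      rw [ENNReal.coe_toNNReal (hI r)]
      calc ∫⁻ y, ‖h (x, y)‖ₑ ∂μ
          ≤ ∫⁻ y, (Metric.ball 0 r).indicator (fun z => ‖w z‖ₑ) (x - y) ∂μ := by
            refine lintegral_mono_ae ?_
            filter_upwards [ae_restrict_mem hΩmeas,
              ae_restrict_of_ae (Measure.ae_ne volume x)] with y hy hxy
            exact hb x hx y hy hxy.symm
        _ ≤ ∫⁻ y, (Metric.ball 0 r).indicator (fun z => ‖w z‖ₑ) (x - y) :=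
            setLIntegral_le_lintegral _ _
        _ = I r := by
            rw [lintegral_sub_left_eq_self (fun z => (Metric.ball 0 r).indicator
              (fun z => ‖w z‖ₑ) z), lintegral_indicator Metric.isOpen_ball.measurableSet]
    · filter_upwards [ae_restrict_mem hΩmeas] with y hy
      rw [ENNReal.coe_toNNReal (hI r)]
      calc ∫⁻ x, ‖h (x, y)‖ₑ ∂μ
          ≤ ∫⁻ x, (Metric.ball 0 r).indicator (fun z => ‖w z‖ₑ) (x - y) ∂μ := by
            refine lintegral_mono_ae ?_
            filter_upwards [ae_restrict_mem hΩmeas,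
              ae_restrict_of_ae (Measure.ae_ne volume y)] with x hx hxy
            exact hb x hx y hy hxy
        _ ≤ ∫⁻ x, (Metric.ball 0 r).indicator (fun z => ‖w z‖ₑ) (x - y) :=
            setLIntegral_le_lintegral _ _
        _ = I r := by
            rw [lintegral_sub_right_eq_self (fun z => (Metric.ball 0 r).indicator
              (fun z => ‖w z‖ₑ) z), lintegral_indicator Metric.isOpen_ball.measurableSet]
  have hkw : ∀ x ∈ Ω, ∀ y ∈ Ω, x ≠ y → ‖k (x, y)‖ₑ ≤ ‖w (x - y)‖ₑ := by
    intro x hx y hy hxy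
    rw [enorm_le_iff_norm_le, Real.norm_of_nonneg (hw0 _)]
    exact hk x hx y hy hxy
  -- A radius exceeding the diameter of `Ω` covers all of `k`.
  obtain ⟨R, hR⟩ := Metric.isBounded_iff.1 hΩbdd
  obtain ⟨Φ, -, hΦ⟩ := hschur (R + 1) k hkmeas fun x hx y hy hxy => by
    rw [Set.indicator_of_mem]
    · exact hkw x hx y hy hxy
    · rw [mem_ball_zero_iff, ← dist_eq_norm]
      linarith [hR hx hy]
  -- Restricting the far region to `Ω ×ˢ Ω` makes the far kernel bounded everywhere, although
  -- nothing is known about `k` outside `Ω ×ˢ Ω`.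
  let S : ℝ → Set (EuclideanSpace ℝ (Fin n) × EuclideanSpace ℝ (Fin n)) := fun r =>
    (Ω ×ˢ Ω) ∩ {p | r ≤ ‖p.1 - p.2‖}
  have hS : ∀ r, MeasurableSet (S r) := fun r =>
    (hΩmeas.prod hΩmeas).inter (measurableSet_le (by fun_prop) (by fun_prop))
  have hfar : ∀ r : ℝ, 0 < r → ∃ Ψ : Lp ℂ 2 μ →L[ℂ] Lp ℂ 2 μ, IsCompactOperator Ψ ∧
      ‖Φ - Ψ‖ ≤ (I r).toReal := by
    intro r hr
    obtain ⟨N, hN, hNk⟩ := hschur r ((S r)ᶜ.indicator k) (hkmeas.indicator (hS r).compl)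
      fun x hx y hy hxy => by
        by_cases hd : r ≤ ‖x - y‖
        · simp [S, hx, hy, hd]
        · rw [Set.indicator_of_mem (s := Metric.ball 0 r) (by simpa using hd)]
          rw [Set.indicator_of_mem (by simp [S, hd])]
          exact hkw x hx y hy hxy
    refine ⟨Φ - N, ?_, by simpa using hN⟩
    refine IsKernelOf.isCompactOperator_of_bounded (k := (S r).indicator k)
      (hkmeas.indicator (hS r)) (M := C * r ^ ((1 : ℝ) - n)) ?_ ?_
    · rintro ⟨x, y⟩
      by_cases hp : (x, y) ∈ S r
      · rw [Set.indicator_of_mem hp]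
        obtain ⟨⟨hx, hy⟩, hd⟩ := hp
        have hd : r ≤ ‖x - y‖ := hd
        refine (hk x hx y hy ?_).trans ?_
        · rintro rfl
          simp at hd; linarith
        · gcongr C * ?_
          refine Real.rpow_le_rpow_of_nonpos hr hd ?_
          have : (2 : ℝ) ≤ n := by exact_mod_cast hn
          linarith
      · rw [Set.indicator_of_notMem hp, norm_zero]
        positivity
    · have e : ∀ p, (S r).indicator k p = k p - (S r)ᶜ.indicator k p := fun p => by
        rw [eq_sub_iff_add_eq, Set.indicator_self_add_compl_apply]
      intro f
      have hi : ∀ᵐ x ∂μ,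
          Integrable (fun y => k (x, y) * f y - (S r)ᶜ.indicator k (x, y) * f y) μ := by
        filter_upwards [(hΦ f).1, (hNk f).1] with x h1 h2 using h1.sub h2
      simp only [e, sub_mul]
      refine ⟨hi, ?_⟩
      rw [sub_apply]
      filter_upwards [(hΦ f).1, (hNk f).1, (hΦ f).2, (hNk f).2, Lp.coeFn_sub (Φ f) (N f)]
        with x h1 h2 h3 h4 h5
      rw [h5, Pi.sub_apply, h3, h4, integral_sub h1 h2]
  choose! Ψ hΨc hΨ using hfar
  refine ⟨Φ, ?_, fun f => (hΦ f).1, fun f => (hΦ f).2⟩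
  refine isCompactOperator_of_tendsto (F := fun m : ℕ => Ψ (1 / (m + 1))) (l := Filter.atTop) ?_
    (.of_forall fun m => hΨc _ (by positivity))
  rw [tendsto_iff_norm_sub_tendsto_zero]
  refine squeeze_zero (fun _ => norm_nonneg _)
    (fun m => (norm_sub_rev _ _).trans_le (hΨ _ (by positivity))) ?_
  simpa [Function.comp_def] using (ENNReal.tendsto_toReal ENNReal.zero_ne_top).comp hI0
end

section
/- Let H be a complex Hilbert space and A a bounded linear operator on H such that A² = A ∘ A is a compact operator. Then the set S := {λ ∈ ℂ : Id − λA is not boundedly invertible} has no accumulation point in ℂ. In particular, 0 ∉ S, Id − λA is boundedly invertible for all λ in a neighborhood of 0, and S is at most countable. -/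
/-!
Write `K = A²`, a compact operator. If `1 - l • A` is not invertible, then neither is
`1 - l² • K = (1 - l • A) (1 + l • A)`, so `l ≠ 0` and, by the Fredholm alternative, `l⁻²` is an
eigenvalue of `K`. It is thus enough that a compact operator has only finitely many eigenvalues
of modulus at least `ε > 0` (`finite_eigenvalues_norm_ge`): then the exceptional set meets every
ball in a finite set, and all the claims follow.

For that finiteness, take infinitely many such eigenvalues `μ n` and apply the Gram-Schmidt process
to their eigenvectors. The resulting orthonormal vectors `x n` satisfy
`⟪x n, K (x n) - K (x m)⟫ = μ n` for `m < n`, so the points `K (x n)` are `ε`-separated, whereas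
they all lie in a compact set.
-/

open Filter Topology

open Module End InnerProductSpace in
/-- The Gram-Schmidt orthonormalization of eigenvectors to distinct eigenvalues has `K`-images
that are separated by the moduli of the eigenvalues, because `K` is upper triangular in it with
the eigenvalues on the diagonal. -/
lemma norm_eigenvalue_le_norm_sub
    {H : Type*} [NormedAddCommGroup H] [InnerProductSpace ℂ H]
    (K : H →ₗ[ℂ] H) (μ : ℕ → ℂ) (v : ℕ → H)
    (hv : ∀ n, HasEigenvector K (μ n) (v n)) (hli : LinearIndependent ℂ v)
    {m n : ℕ} (hmn : m < n) :
    ‖μ n‖ ≤ ‖K (gramSchmidtNormed ℂ v n) - K (gramSchmidtNormed ℂ v m)‖ := by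
  have hon := gramSchmidtNormed_orthonormal hli
  set x := gramSchmidtNormed ℂ v with hx
  have hspan_Iio (k : ℕ) :
      Submodule.span ℂ (x '' Set.Iio k) = Submodule.span ℂ (v '' Set.Iio k) := by
    rw [hx, span_gramSchmidtNormed, span_gramSchmidt_Iio]
  have hmem (k : ℕ) : x k ∈ Submodule.span ℂ (v '' Set.Iic k) := by
    rw [← span_gramSchmidt_Iic, ← span_gramSchmidtNormed]
    exact Submodule.subset_span ⟨k, Set.self_mem_Iic, rfl⟩
  have horth (y : H) (hy : y ∈ Submodule.span ℂ (v '' Set.Iio n)) : inner ℂ (x n) y = 0 := by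
    rw [← hspan_Iio] at hy
    induction hy using Submodule.span_induction with
    | mem y hy =>
      obtain ⟨k, hk, rfl⟩ := hy
      exact hon.2 (ne_of_gt hk)
    | zero => simp
    | add y z _ _ hy hz => rw [inner_add_right, hy, hz, add_zero]
    | smul c y _ hy => rw [inner_smul_right, hy, mul_zero]
  have hdiag : K (x n) - μ n • x n ∈ Submodule.span ℂ (v '' Set.Iio n) := by
    have hle : Submodule.span ℂ (v '' Set.Iic n) ≤
        (Submodule.span ℂ (v '' Set.Iio n)).comap (K - μ n • LinearMap.id) := by
      rw [Submodule.span_le]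
      rintro _ ⟨k, hk, rfl⟩
      have hKk : (K - μ n • LinearMap.id : H →ₗ[ℂ] H) (v k) = (μ k - μ n) • v k := by
        simp [(hv k).apply_eq_smul, sub_smul]
      rw [SetLike.mem_coe, Submodule.mem_comap, hKk]
      rcases (Set.mem_Iic.mp hk).eq_or_lt with rfl | hlt
      · simp
      · exact Submodule.smul_mem _ _ (Submodule.subset_span ⟨k, hlt, rfl⟩)
    simpa using hle (hmem n)
  have hlow : K (x m) ∈ Submodule.span ℂ (v '' Set.Iio n) := by
    have hle : Submodule.span ℂ (v '' Set.Iic m) ≤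
        (Submodule.span ℂ (v '' Set.Iio n)).comap K := by
      rw [Submodule.span_le]
      rintro _ ⟨k, hk, rfl⟩
      rw [SetLike.mem_coe, Submodule.mem_comap, (hv k).apply_eq_smul]
      exact Submodule.smul_mem _ _ (Submodule.subset_span ⟨k, lt_of_le_of_lt hk hmn, rfl⟩)
    exact hle (hmem m)
  have hinner : inner ℂ (x n) (K (x n) - K (x m)) = μ n := by
    have hsplit : K (x n) - K (x m) = μ n • x n + ((K (x n) - μ n • x n) - K (x m)) := by abel
    rw [hsplit, inner_add_right, horth _ (Submodule.sub_mem _ hdiag hlow), inner_smul_right,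
      inner_self_eq_norm_sq_to_K, hon.1 n]
    simp
  calc ‖μ n‖ = ‖inner ℂ (x n) (K (x n) - K (x m))‖ := by rw [hinner]
    _ ≤ ‖x n‖ * ‖K (x n) - K (x m)‖ := norm_inner_le_norm _ _
    _ = ‖K (x n) - K (x m)‖ := by rw [hon.1 n, one_mul]

open Module End InnerProductSpace in
lemma finite_eigenvalues_norm_ge
    {H : Type*} [NormedAddCommGroup H] [InnerProductSpace ℂ H]
    (K : H →L[ℂ] H) (hK : IsCompactOperator K) {ε : ℝ} (hε : 0 < ε) :
    {μ : ℂ | HasEigenvalue (K : End ℂ H) μ ∧ ε ≤ ‖μ‖}.Finite := by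
  by_contra hinf
  have hinf : Set.Infinite {μ : ℂ | HasEigenvalue (K : End ℂ H) μ ∧ ε ≤ ‖μ‖} := hinf
  let e := hinf.natEmbedding
  choose v hv using fun n => (e n).2.1.exists_hasEigenvector
  have hli : LinearIndependent ℂ v := eigenvectors_linearIndependent' (K : End ℂ H)
    (fun n => (e n : ℂ)) (Subtype.val_injective.comp e.injective) v hv
  obtain ⟨C, hC, hsub⟩ := hK.image_closedBall_subset_compact (f := (K : H →ₗ[ℂ] H)) 1
  obtain ⟨y, -, ψ, hψ, hlim⟩ := hC.tendsto_subseq (x := fun n => K (gramSchmidtNormed ℂ v n))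
    (fun n => hsub ⟨_, by simp [gramSchmidtNormed_unit_length n hli], rfl⟩)
  obtain ⟨N, hN⟩ := Metric.cauchySeq_iff'.mp hlim.cauchySeq ε hε
  have hlt := hN (N + 1) N.le_succ
  rw [dist_eq_norm] at hlt
  exact absurd hlt (not_lt.mpr ((e (ψ (N + 1))).2.2.trans
    (norm_eigenvalue_le_norm_sub (K : H →ₗ[ℂ] H) _ v hv hli (hψ N.lt_succ_self))))

open Module End in
/-- Factorization `1 - l² A² = (1 - l A) (1 + l A)` combined with the Fredholm alternative
for `A²`. -/
lemma hasEigenvalue_sq_of_not_isUnit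
    {H : Type*} [NormedAddCommGroup H] [InnerProductSpace ℂ H] [CompleteSpace H]
    (A : H →L[ℂ] H) (hA : IsCompactOperator (A * A)) {l : ℂ} (hl : ¬ IsUnit (1 - l • A)) :
    HasEigenvalue ((A * A : H →L[ℂ] H) : End ℂ H) (l ^ 2)⁻¹ := by
  have hl0 : l ≠ 0 := by
    rintro rfl
    simp at hl
  have hμ : (l ^ 2)⁻¹ ≠ 0 := inv_ne_zero (pow_ne_zero 2 hl0)
  refine (hA.hasEigenvalue_or_mem_resolventSet (T := A * A) hμ).resolve_right fun hres => hl ?_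
  have hfac : (1 - l • A) * (1 + l • A) =
      (l ^ 2) • (algebraMap ℂ (H →L[ℂ] H) (l ^ 2)⁻¹ - A * A) := by
    rw [Algebra.algebraMap_eq_smul_one, smul_sub, smul_inv_smul₀ (pow_ne_zero 2 hl0)]
    simp only [sub_mul, mul_add, one_mul, mul_one, smul_mul_smul_comm, pow_two]
    abel
  have hcomm : Commute (1 - l • A) (1 + l • A) :=
    ((Commute.one_left _).sub_left (((Commute.one_right _).add_right (Commute.refl _))))
  have hunit : IsUnit ((1 - l • A) * (1 + l • A)) := by
    rw [hfac]
    exact (spectrum.mem_resolventSet_iff.mp hres).smul (Units.mk0 (l ^ 2) (pow_ne_zero 2 hl0))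
  exact (hcomm.isUnit_mul_iff.mp hunit).1

lemma finite_not_isUnit_inter_closedBall
    {H : Type*} [NormedAddCommGroup H] [InnerProductSpace ℂ H] [CompleteSpace H]
    (A : H →L[ℂ] H) (hA : IsCompactOperator (A * A)) {R : ℝ} (hR : 0 < R) :
    ({l : ℂ | ¬ IsUnit (1 - l • A)} ∩ Metric.closedBall 0 R).Finite := by
  have hfin := finite_eigenvalues_norm_ge (A * A) hA (ε := (R ^ 2)⁻¹) (by positivity)
  refine (hfin.preimage' (f := fun l : ℂ => (l ^ 2)⁻¹) fun b _ => ?_).subset ?_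
  · -- The fibres of `l ↦ l⁻²` have at most two elements.
    rcases Set.eq_empty_or_nonempty ((fun l : ℂ => (l ^ 2)⁻¹) ⁻¹' {b}) with h | ⟨l₀, hl₀⟩
    · rw [h]
      exact Set.finite_empty
    · refine (Set.toFinite {l₀, -l₀}).subset fun l hl => ?_
      have hsq : l ^ 2 = l₀ ^ 2 := inv_injective (hl.trans hl₀.symm)
      exact sq_eq_sq_iff_eq_or_eq_neg.mp hsq
  · rintro l ⟨hl, hlR⟩
    have hl0 : l ≠ 0 := by
      rintro rfl
      simp at hl
    refine ⟨hasEigenvalue_sq_of_not_isUnit A hA hl, ?_⟩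
    rw [mem_closedBall_zero_iff] at hlR
    have hpos : 0 < ‖l‖ := norm_pos_iff.mpr hl0
    rw [norm_inv, norm_pow]
    gcongr

/-- If `A` is a bounded operator on a complex Hilbert space with `A²` compact, then the
set `S` of `λ ∈ ℂ` for which `Id - λA` is not invertible has no accumulation point in
`ℂ`; in particular `0 ∉ S`, `Id - λA` is invertible for all `λ` near `0`, and `S` is at
most countable. -/
theorem resolvent_set_discrete_of_sq_compact
    {H : Type*} [NormedAddCommGroup H] [InnerProductSpace ℂ H] [CompleteSpace H]
    (A : H →L[ℂ] H) (hA : IsCompactOperator (A * A)) :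
    (∀ z : ℂ, ∃ U ∈ 𝓝 z, U ∩ {l : ℂ | ¬ IsUnit (1 - l • A)} ⊆ {z}) ∧
    (0 : ℂ) ∉ {l : ℂ | ¬ IsUnit (1 - l • A)} ∧
    (∀ᶠ l in 𝓝 (0 : ℂ), IsUnit (1 - l • A)) ∧
    Set.Countable {l : ℂ | ¬ IsUnit (1 - l • A)} := by
  set S : Set ℂ := {l : ℂ | ¬ IsUnit (1 - l • A)} with hS
  have hdisc : ∀ z : ℂ, ∃ U ∈ 𝓝 z, U ∩ S ⊆ {z} := by
    intro z
    have hfin := finite_not_isUnit_inter_closedBall A hA (R := ‖z‖ + 1) (by positivity)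
    have hclosed := (hfin.sdiff (t := {z})).isClosed
    refine ⟨Metric.closedBall 0 (‖z‖ + 1) ∩ ((S ∩ Metric.closedBall 0 (‖z‖ + 1)) \ {z})ᶜ,
      inter_mem ?_ (hclosed.isOpen_compl.mem_nhds (by simp)), ?_⟩
    · exact mem_of_superset (Metric.isOpen_ball.mem_nhds (by simp)) Metric.ball_subset_closedBall
    · rintro l ⟨⟨hlball, hl⟩, hlS⟩
      by_contra hne
      exact hl ⟨⟨hlS, hlball⟩, hne⟩
  have hzero : (0 : ℂ) ∉ S := by simp [hS]
  refine ⟨hdisc, hzero, ?_, ?_⟩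
  · obtain ⟨U, hU, hUS⟩ := hdisc 0
    filter_upwards [hU] with l hl
    by_contra hlS
    have hl0 : l = 0 := hUS ⟨hl, hlS⟩
    exact hzero (hl0 ▸ hlS)
  · refine (Set.countable_iUnion fun n : ℕ =>
      (finite_not_isUnit_inter_closedBall A hA (R := n + 1) (by positivity)).countable).mono ?_
    intro l hl
    obtain ⟨n, hn⟩ := exists_nat_ge ‖l‖
    exact Set.mem_iUnion.mpr ⟨n, hl, by rw [mem_closedBall_zero_iff]; linarith⟩
end
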